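/- arXiv:1108.0377 — 7 statements merged into one kernel-verified Lean document; each statement's English description precedes it below -/
import Mathlib

section
/- A successful forgery against the H-DL hash yields a hash collision: let v̂_1, …, v̂_m ∈ (ZMod q)^n with honest hashes h_i = hash(v̂_i). If ŷ ∈ (ZMod q)^n satisfies ŷ ∉ span(v̂_1, …, v̂_m) and the test Π_j g_j^{(ŷ_j).val} = Π_i h_i^{(β_i).val} passes for some β ∈ (ZMod q)^m, then setting v̂ = Σ_i β_i · v̂_i one has ŷ ≠ v̂ and hash(ŷ) = hash(v̂), i.e. two distinct vectors with equal hash. -/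
/-- a successful forgery against the H-DL hash yields a hash collision.
If `ŷ ∉ span(v̂_1, …, v̂_m)` and the test `Π_j g_j^(ŷ_j).val = Π_i h_i^(β_i).val`
passes (where `h_i = hash(v̂_i)`), then with `v̂ = Σ_i β_i • v̂_i` we have `ŷ ≠ v̂`
and `hash(ŷ) = hash(v̂)`: two distinct vectors with equal hash. -/
theorem hdl_forgery_gives_collision {G : Type*} [CommGroup G] [Fintype G]
    (q n m : ℕ) (hq : q.Prime) (hcard : Fintype.card G = q)
    (gg : Fin n → G) (vhat : Fin m → Fin n → ZMod q)
    (yhat : Fin n → ZMod q) (β : Fin m → ZMod q)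
    (hy : yhat ∉ Submodule.span (ZMod q) (Set.range vhat))
    (htest : (∏ j : Fin n, gg j ^ (yhat j).val)
      = ∏ i : Fin m, (∏ j : Fin n, gg j ^ (vhat i j).val) ^ (β i).val) :
    yhat ≠ (∑ i : Fin m, β i • vhat i) ∧
      (∏ j : Fin n, gg j ^ (yhat j).val)
        = ∏ j : Fin n, gg j ^ (((∑ i : Fin m, β i • vhat i) j)).val := by
  haveI : NeZero q := ⟨hq.ne_zero⟩
  refine ⟨?_, ?_⟩
  · intro h
    apply hy
    rw [h]
    exact Submodule.sum_mem _ fun i _ =>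
      Submodule.smul_mem _ _ (Submodule.subset_span ⟨i, rfl⟩)
  · rw [htest]
    simp_rw [← Finset.prod_pow]
    rw [Finset.prod_comm]
    refine Finset.prod_congr rfl fun j _ => ?_
    simp_rw [← pow_mul]
    rw [Finset.prod_pow_eq_pow_sum]
    have hg : gg j ^ q = 1 := by rw [← hcard]; exact pow_card_eq_one
    refine pow_eq_pow_of_modEq ?_ hg
    rw [← ZMod.natCast_eq_natCast_iff]
    simp [Finset.sum_apply, mul_comm]
end

section
/- Dimension of the null space used to generate InterMac keys: fix p ∈ Fin s, and let Π_{M_p}^⊥ = {z ∈ F^{n+m} : v_{i,j} · z = 0 for all i ≠ p and all j ∈ Fin g}, the set of vectors orthogonal to the committed source packets of all sources other than S_p. Then Π_{M_p}^⊥ is a linear subspace of F^{n+m} of dimension exactly n + g. -/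
theorem srcIdx_lt {s g : ℕ} (i : Fin s) (j : Fin g) : g * i.1 + j.1 < s * g := by
  have hi := i.2; have hj := j.2
  calc g * i.1 + j.1 < g * (i.1 + 1) := by rw [Nat.mul_add, Nat.mul_one]; omega
    _ ≤ g * s := Nat.mul_le_mul_left g hi
    _ = s * g := Nat.mul_comm g s

/-- The index `g·i + j` of the augmentation coordinate of the source packet `v_{i,j}`. -/
def srcIdx {s g : ℕ} (i : Fin s) (j : Fin g) : Fin (s * g) :=
  ⟨g * i.1 + j.1, srcIdx_lt i j⟩

/-- The augmented source packet `v_{i,j} = (v̂_{i,j}, e_{g·i+j}) ∈ F^{n+m}`, `m = s·g`. -/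
def pkt {q s g n : ℕ} (vhat : Fin s → Fin g → Fin n → ZMod q)
    (i : Fin s) (j : Fin g) : Fin (n + s * g) → ZMod q :=
  Fin.append (vhat i j) (Pi.single (srcIdx i j) 1)

/-- the set `Π_{M_p}^⊥` of vectors orthogonal to the committed source
packets of all sources other than `S_p` is a linear subspace of `F^{n+m}` of
dimension exactly `n + g`. -/
theorem null_space_dimension
    (q s g n : ℕ) (hq : q.Prime) (hs : 0 < s) (hg : 0 < g) (hn : 0 < n)
    (vhat : Fin s → Fin g → Fin n → ZMod q) (p : Fin s) :
    ∃ W : Submodule (ZMod q) (Fin (n + s * g) → ZMod q),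
      (W : Set (Fin (n + s * g) → ZMod q))
        = {z | ∀ i : Fin s, i ≠ p → ∀ j : Fin g,
            (∑ r : Fin (n + s * g), pkt vhat i j r * z r) = 0} ∧
      Module.finrank (ZMod q) W = n + g := by
  haveI : Fact q.Prime := ⟨hq⟩
  let T : (Fin (n + s * g) → ZMod q) →ₗ[ZMod q] ({i : Fin s // i ≠ p} × Fin g → ZMod q) :=
    { toFun := fun z x => ∑ r : Fin (n + s * g), pkt vhat x.1.1 x.2 r * z r
      map_add' := by
        intro a b
        ext x
        simp [mul_add, Finset.sum_add_distrib]
      map_smul' := by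
        intro c a
        ext x
        simp only [Pi.smul_apply, smul_eq_mul, RingHom.id_apply, Finset.mul_sum]
        exact Finset.sum_congr rfl fun r _ => by ring }
  have hinj : Function.Injective
      (fun x : {i : Fin s // i ≠ p} × Fin g => srcIdx x.1.1 x.2) := by
    rintro ⟨⟨i, hi⟩, j⟩ ⟨⟨k, hk⟩, l⟩ h
    have h' : g * i.1 + j.1 = g * k.1 + l.1 := congrArg Fin.val h
    have h1 : i.1 = k.1 := by
      have := congrArg (· / g) h'
      simpa [Nat.mul_add_div hg, Nat.div_eq_of_lt j.2, Nat.div_eq_of_lt l.2] using this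
    have h2 : j.1 = l.1 := by
      rw [h1] at h'
      omega
    have h3 := Fin.ext h1
    have h4 := Fin.ext h2
    subst h3 h4
    rfl
  have hsurj : Function.Surjective T := by
    intro y
    refine ⟨Fin.append 0 (Function.extend
      (fun x : {i : Fin s // i ≠ p} × Fin g => srcIdx x.1.1 x.2) y 0), ?_⟩
    ext x
    change ∑ r : Fin (n + s * g), pkt vhat x.1.1 x.2 r * _ = _
    rw [Fin.sum_univ_add]
    simp only [pkt, Fin.append_left, Fin.append_right, Pi.zero_apply, mul_zero,
      Finset.sum_const_zero, zero_add, Pi.single_apply, ite_mul, one_mul, zero_mul,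
      Finset.sum_ite_eq', Finset.sum_ite_eq, Finset.mem_univ, if_true]
    exact hinj.extend_apply y 0 x
  refine ⟨LinearMap.ker T, ?_, ?_⟩
  · ext z
    simp only [SetLike.mem_coe, LinearMap.mem_ker, Set.mem_ofPred_eq]
    constructor
    · intro h i hi j
      exact congrFun h (⟨i, hi⟩, j)
    · intro h
      ext x
      exact h x.1.1 x.1.2 x.2
  · have h := LinearMap.finrank_range_add_finrank_ker T
    rw [LinearMap.range_eq_top.mpr hsurj, finrank_top, Module.finrank_fintype_fun_eq_card,
      Module.finrank_fintype_fun_eq_card, Fintype.card_prod, Fintype.card_fin,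
      Fintype.card_fin, Fintype.card_subtype_compl, Fintype.card_fin,
      Fintype.card_subtype_eq] at h
    obtain ⟨t, rfl⟩ : ∃ t, s = t + 1 := ⟨s - 1, by omega⟩
    rw [Nat.add_sub_cancel] at h
    have h5 : (t + 1) * g = t * g + g := by ring
    omega
end

section
/- Correctness of the InterMac multi-source homomorphic MAC: suppose the keys k_1, …, k_s ∈ F^{n+m} satisfy the orthogonality condition v_{i,j} · k_p = 0 for all p and all i ≠ p, j ∈ Fin g, and let the tag of each source packet be t_{i,j} = k_i · v_{i,j}. Then for any coefficients α_{i,j} ∈ F, the combined tag equals the verification value: (Σ_{i,j} α_{i,j} · v_{i,j}) · (k_1 + ⋯ + k_s) = Σ_{i,j} α_{i,j} · t_{i,j}. Hence Verify accepts every linear combination of the committed source packets together with the correspondingly combined tag. -/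
/-- correctness of the InterMac multi-source homomorphic MAC.
If the keys satisfy `v_{i,j} · k_p = 0` for all `i ≠ p`, and `t_{i,j} = k_i · v_{i,j}`,
then for any coefficients `α`, the combined tag equals the verification value:
`(Σ_{i,j} α_{i,j} • v_{i,j}) · (k_1 + ⋯ + k_s) = Σ_{i,j} α_{i,j} · t_{i,j}`. -/
theorem intermac_correctness
    (q s g n : ℕ) (hq : q.Prime) (hs : 0 < s) (hg : 0 < g) (hn : 0 < n)
    (vhat : Fin s → Fin g → Fin n → ZMod q)
    (k : Fin s → Fin (n + s * g) → ZMod q)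
    (horth : ∀ p i : Fin s, i ≠ p → ∀ j : Fin g,
      (∑ r : Fin (n + s * g), pkt vhat i j r * k p r) = 0)
    (t : Fin s → Fin g → ZMod q)
    (ht : ∀ (i : Fin s) (j : Fin g),
      t i j = ∑ r : Fin (n + s * g), k i r * pkt vhat i j r)
    (α : Fin s → Fin g → ZMod q) :
    (∑ r : Fin (n + s * g),
        (∑ i : Fin s, ∑ j : Fin g, α i j • pkt vhat i j) r * (∑ p : Fin s, k p) r)
      = ∑ i : Fin s, ∑ j : Fin g, α i j * t i j := by
  change (∑ i : Fin s, ∑ j : Fin g, α i j • pkt vhat i j) ⬝ᵥ (∑ p : Fin s, k p) = _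
  rw [sum_dotProduct]
  refine Finset.sum_congr rfl fun i _ => ?_
  rw [sum_dotProduct]
  refine Finset.sum_congr rfl fun j _ => ?_
  rw [smul_dotProduct, smul_eq_mul, dotProduct_sum, ht]
  congr 1
  rw [Finset.sum_eq_single i]
  · exact dotProduct_comm _ _
  · intro p _ hp
    exact horth p i (Ne.symm hp) j
  · intro h
    exact absurd (Finset.mem_univ i) h
end

section
/- Equidistribution of the forged tag: let w_1, …, w_m ∈ F^N be linearly independent and let y ∈ F^N with y ∉ span(w_1, …, w_m). For every t_1, …, t_m ∈ F, the solution set S = {k ∈ F^N : w_i · k = t_i for all i} has exactly q^{N−m} elements, and for every t* ∈ F, q · |{k ∈ S : y · k = t*}| = |S|; i.e., exactly a 1/q fraction of the keys consistent with all observed tags assign any given tag value t* to the corrupted packet y. -/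
theorem solution_count_aux (q N n : ℕ) (hq : q.Prime)
    (w : Fin n → Fin N → ZMod q) (hw : LinearIndependent (ZMod q) w)
    (t : Fin n → ZMod q) :
    n ≤ N ∧ Set.ncard {k : Fin N → ZMod q |
        ∀ i : Fin n, (∑ r : Fin N, w i r * k r) = t i} = q ^ (N - n) := by
  have : Fact q.Prime := ⟨hq⟩
  have hle : n ≤ N := by
    have := hw.fintype_card_le_finrank
    simpa using this
  refine ⟨hle, ?_⟩
  let f : (Fin N → ZMod q) →ₗ[ZMod q] (Fin n → ZMod q) := (Matrix.of w).mulVecLin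
  have hf : ∀ k i, f k i = ∑ r : Fin N, w i r * k r := fun k i => rfl
  have hrank : Module.finrank (ZMod q) (LinearMap.range f) = n := by
    have := LinearIndependent.rank_matrix (M := Matrix.of w) hw
    simpa [Matrix.rank] using this
  have hsurj : Function.Surjective f := by
    rw [← LinearMap.range_eq_top]
    apply Submodule.eq_top_of_finrank_eq
    rw [hrank]; simp
  have hker : Module.finrank (ZMod q) (LinearMap.ker f) = N - n := by
    have := LinearMap.finrank_range_add_finrank_ker f
    rw [hrank] at this
    simp at this
    omega
  obtain ⟨k0, hk0⟩ := hsurj t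
  have hS : {k : Fin N → ZMod q | ∀ i : Fin n, (∑ r : Fin N, w i r * k r) = t i}
      = Set.image (fun k => k0 + k) (LinearMap.ker f : Set (Fin N → ZMod q)) := by
    ext k
    have h1 : (∀ i : Fin n, (∑ r : Fin N, w i r * k r) = t i) ↔ f k = t := by
      rw [funext_iff]; rfl
    simp only [Set.mem_ofPred_eq, h1, Set.mem_image, SetLike.mem_coe, LinearMap.mem_ker]
    constructor
    · intro h
      exact ⟨k - k0, by rw [map_sub, h, hk0, sub_self], by abel⟩
    · rintro ⟨x, hx, rfl⟩
      rw [map_add, hx, hk0, add_zero]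
  rw [hS, Set.ncard_image_of_injective _ (add_right_injective k0), ← Nat.card_coe_set_eq]
  have := Module.natCard_eq_pow_finrank (K := ZMod q) (V := LinearMap.ker f)
  rw [hker, Nat.card_zmod] at this
  exact this

/-- equidistribution of the forged tag.  If `w_1, …, w_m ∈ F^N` are
linearly independent and `y ∉ span(w_1, …, w_m)`, then for every `t_1, …, t_m` the
solution set `S = {k : w_i · k = t_i for all i}` has exactly `q^(N−m)` elements,
and for every `t*`, `q · |{k ∈ S : y · k = t*}| = |S|`: exactly a `1/q` fraction of
the consistent keys assign the tag value `t*` to the corrupted packet `y`. -/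
theorem forged_tag_equidistribution
    (q N m : ℕ) (hq : q.Prime)
    (w : Fin m → Fin N → ZMod q)
    (hw : LinearIndependent (ZMod q) w)
    (y : Fin N → ZMod q)
    (hy : y ∉ Submodule.span (ZMod q) (Set.range w))
    (t : Fin m → ZMod q) :
    Set.ncard {k : Fin N → ZMod q |
        ∀ i : Fin m, (∑ r : Fin N, w i r * k r) = t i} = q ^ (N - m) ∧
      ∀ tstar : ZMod q,
        q * Set.ncard {k : Fin N → ZMod q |
            (∀ i : Fin m, (∑ r : Fin N, w i r * k r) = t i) ∧
              (∑ r : Fin N, y r * k r) = tstar}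
          = Set.ncard {k : Fin N → ZMod q |
              ∀ i : Fin m, (∑ r : Fin N, w i r * k r) = t i} := by
  have h1 := solution_count_aux q N m hq w hw t
  refine ⟨h1.2, fun tstar => ?_⟩
  have : Fact q.Prime := ⟨hq⟩
  have hwy : LinearIndependent (ZMod q) (Fin.cons y w : Fin (m + 1) → Fin N → ZMod q) :=
    linearIndependent_finCons.mpr ⟨hw, hy⟩
  obtain ⟨hle, h2⟩ := solution_count_aux q N (m + 1) hq _ hwy (Fin.cons tstar t)
  simp only [Fin.forall_fin_succ, Fin.cons_zero, Fin.cons_succ] at h2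
  simp only [and_comm (b := (∑ r : Fin N, y r * _) = tstar)]
  rw [h2, h1.2, ← pow_succ']
  congr 1
  omega
end

section
/- Probabilistic form of the forgery bound: let w_1, …, w_m ∈ F^N be linearly independent, y ∈ F^N with y ∉ span(w_1, …, w_m), and t_1, …, t_m ∈ F. Let S be the (nonempty, finite) set {k ∈ F^N : w_i · k = t_i for all i}. If k is drawn uniformly at random from S, then for every t* ∈ F the probability that y · k = t* equals 1/q. -/
/-- probabilistic form of the forgery bound.  Let `w_1, …, w_m ∈ F^N`
be linearly independent, `y ∉ span(w_1, …, w_m)`, and let `S` be the (nonempty,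
finite) set of keys `k` with `w_i · k = t_i` for all `i`.  If `k` is drawn uniformly
at random from `S`, then for every `t*` the probability that `y · k = t*` is `1/q`. -/
theorem forgery_probability_bound
    (q N m : ℕ) (hq : q.Prime)
    (w : Fin m → Fin N → ZMod q)
    (hw : LinearIndependent (ZMod q) w)
    (y : Fin N → ZMod q)
    (hy : y ∉ Submodule.span (ZMod q) (Set.range w))
    (t : Fin m → ZMod q)
    (S : Finset (Fin N → ZMod q))
    (hS : ∀ k : Fin N → ZMod q,
      k ∈ S ↔ ∀ i : Fin m, (∑ r : Fin N, w i r * k r) = t i)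
    (hne : S.Nonempty) (tstar : ZMod q) :
    (PMF.uniformOfFinset S hne).toOuterMeasure
        {k : Fin N → ZMod q | (∑ r : Fin N, y r * k r) = tstar}
      = 1 / (q : ENNReal) := by
  classical
  haveI : Fact q.Prime := ⟨hq⟩
  obtain ⟨f, hfy, hf⟩ := Submodule.exists_le_ker_of_notMem hy
  have hfx : ∀ x : Fin N → ZMod q, f x = ∑ r, x r * f (Pi.single r 1) := by
    intro x
    conv_lhs => rw [pi_eq_sum_univ' x]
    simp only [map_sum, map_smul, smul_eq_mul]
  obtain ⟨v, hv, hv1⟩ : ∃ v : Fin N → ZMod q,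
      (∀ i, ∑ r, w i r * v r = 0) ∧ ∑ r, y r * v r = 1 := by
    refine ⟨fun r => f (Pi.single r 1) * (f y)⁻¹, fun i => ?_, ?_⟩
    · simp only [← mul_assoc]
      rw [← Finset.sum_mul, ← hfx]
      have : f (w i) = 0 := hf (Submodule.subset_span ⟨i, rfl⟩)
      rw [this, zero_mul]
    · simp only [← mul_assoc]
      rw [← Finset.sum_mul, ← hfx]
      exact mul_inv_cancel₀ hfy
  have key : ∀ (u k : Fin N → ZMod q) (c : ZMod q),
      ∑ r, u r * (k + c • v) r = ∑ r, u r * k r + c * ∑ r, u r * v r := by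
    intro u k c
    rw [Finset.mul_sum, ← Finset.sum_add_distrib]
    refine Finset.sum_congr rfl fun r _ => ?_
    simp only [Pi.add_apply, Pi.smul_apply, smul_eq_mul]
    ring
  have hmem : ∀ (k : Fin N → ZMod q) (c : ZMod q), k ∈ S → k + c • v ∈ S := by
    intro k c hk
    rw [hS] at hk ⊢
    intro i
    rw [key, hv, hk i, mul_zero, add_zero]
  have hle : ∀ a b : ZMod q, (S.filter fun k => ∑ r, y r * k r = a).card ≤
      (S.filter fun k => ∑ r, y r * k r = b).card := by
    intro a b
    refine Finset.card_le_card_of_injOn (fun k => k + (b - a) • v) ?_ ?_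
    · intro k hk
      simp only [Finset.coe_filter, Set.mem_setOf_eq] at hk ⊢
      refine ⟨hmem _ _ hk.1, ?_⟩
      rw [key, hv1, hk.2]
      ring
    · intro k _ l _ h
      exact add_right_cancel h
  have hcard : S.card = q * (S.filter fun k => ∑ r, y r * k r = tstar).card := by
    rw [Finset.card_eq_sum_card_fiberwise (f := fun k => ∑ r, y r * k r)
      (t := (Finset.univ : Finset (ZMod q))) (fun _ _ => by simp)]
    rw [Finset.sum_congr rfl (fun a _ => le_antisymm (hle a tstar) (hle tstar a))]
    simp [ZMod.card]
  have hpos := hne.card_pos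
  rw [PMF.toOuterMeasure_uniformOfFinset_apply]
  simp only [Set.mem_setOf_eq]
  rw [hcard] at hpos ⊢
  have hc : (S.filter fun k => ∑ r, y r * k r = tstar).card ≠ 0 := by
    intro h
    rw [h] at hpos
    simp at hpos
  generalize (S.filter fun k => ∑ r, y r * k r = tstar).card = c at hc
  push_cast
  rw [← ENNReal.mul_div_mul_right 1 (q : ENNReal) (c := (c : ENNReal))
    (by exact_mod_cast hc) (ENNReal.natCast_ne_top c), one_mul]
end

section
/- Core of the InterMac security theorem: let the augmented source packets v_{i,j} ∈ F^{n+m} be as given, let Π = span of all v_{i,j}, and let W = Π_{M_1}^⊥ = {z ∈ F^{n+m} : v_{i,j} · z = 0 for all i ≠ 1, j}. For any y* ∈ F^{n+m} with y* ∉ Π and any values t_1, …, t_g ∈ F and t* ∈ F, the set {k ∈ W : v_{1,j} · k = t_j for all j ∈ Fin g, and y* · k = t*} has exactly q^{n−1} elements; in particular its cardinality does not depend on t*, so when the hidden key k_1 is uniform on the set of keys in W consistent with the observed tags, every candidate tag t* for the corrupted packet y* is equally likely. -/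
theorem im_card_aux {q : ℕ} [Fact q.Prime] {ι κ : Type} [Fintype ι] [Fintype κ]
    (w : ι → κ → ZMod q) (hw : LinearIndependent (ZMod q) w) (c : ι → ZMod q) :
    Set.ncard {k : κ → ZMod q | ∀ i, (∑ r, w i r * k r) = c i}
      = q ^ (Fintype.card κ - Fintype.card ι) := by
  classical
  let L : (κ → ZMod q) →ₗ[ZMod q] (ι → ZMod q) := (Matrix.of w).mulVecLin
  have hr : Module.finrank (ZMod q) (LinearMap.range L) = Fintype.card ι :=
    LinearIndependent.rank_matrix (M := Matrix.of w) hw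
  have hsurj : LinearMap.range L = ⊤ := by
    apply Submodule.eq_top_of_finrank_eq
    rw [hr]; simp
  obtain ⟨k0, hk0⟩ := LinearMap.range_eq_top.mp hsurj c
  have hker : Module.finrank (ZMod q) (LinearMap.ker L) = Fintype.card κ - Fintype.card ι := by
    have h := LinearMap.finrank_range_add_finrank_ker L
    rw [hr] at h
    simp at h
    omega
  have hset : {k : κ → ZMod q | ∀ i, (∑ r, w i r * k r) = c i}
      = (fun x => x + k0) '' (LinearMap.ker L : Set (κ → ZMod q)) := by
    ext k
    have h1 : (∀ i, (∑ r, w i r * k r) = c i) ↔ L k = c := by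
      rw [funext_iff]; rfl
    rw [Set.mem_setOf_eq, h1]
    constructor
    · intro h
      exact ⟨k - k0, by simp [LinearMap.mem_ker, h, hk0], by simp⟩
    · rintro ⟨x, hx, rfl⟩
      have hx' : L x = 0 := hx
      simp [hx', hk0]
  rw [hset, Set.ncard_image_of_injective _ (add_left_injective k0), ← Nat.card_coe_set_eq]
  have h := Module.natCard_eq_pow_finrank (K := ZMod q) (V := LinearMap.ker L)
  rw [hker, Nat.card_zmod] at h
  exact h

theorem im_pkt_indep {q s g n : ℕ} [Fact q.Prime] (vhat : Fin s → Fin g → Fin n → ZMod q) :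
    LinearIndependent (ZMod q) (fun p : Fin s × Fin g => pkt vhat p.1 p.2) := by
  rw [Fintype.linearIndependent_iff]
  intro c hc p
  have hinj : ∀ p' : Fin s × Fin g, srcIdx p.1 p.2 = srcIdx p'.1 p'.2 ↔ p = p' := by
    intro p'
    constructor
    · intro h
      apply finProdFinEquiv.injective
      have := congrArg Fin.val h
      simp only [srcIdx] at this
      apply Fin.ext
      simp only [finProdFinEquiv_apply_val]
      omega
    · rintro rfl; rfl
  have h := congrFun hc (Fin.natAdd n (srcIdx p.1 p.2))
  simpa [Finset.sum_apply, pkt, Fin.append_right, Pi.single_apply, hinj] using h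

/-- core of the InterMac security theorem.  With
`W = Π_{M_1}^⊥ = {z : v_{i,j} · z = 0 for all i ≠ 1, j}` (source 1 is index `0`),
for any `y* ∉ Π = span{v_{i,j}}` and any `t_1, …, t_g, t*`, the set of keys
`k ∈ W` with `v_{1,j} · k = t_j` for all `j` and `y* · k = t*` has exactly
`q^(n−1)` elements; in particular its cardinality does not depend on `t*`. -/
theorem intermac_security_core
    (q s g n : ℕ) (hq : q.Prime) (hs : 0 < s) (hg : 0 < g) (hn : 0 < n)
    (vhat : Fin s → Fin g → Fin n → ZMod q)
    (ystar : Fin (n + s * g) → ZMod q)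
    (hy : ystar ∉ Submodule.span (ZMod q)
      (Set.range fun p : Fin s × Fin g => pkt vhat p.1 p.2))
    (t : Fin g → ZMod q) (tstar : ZMod q) :
    Set.ncard {k : Fin (n + s * g) → ZMod q |
        (∀ i : Fin s, i ≠ (⟨0, hs⟩ : Fin s) → ∀ j : Fin g,
          (∑ r : Fin (n + s * g), pkt vhat i j r * k r) = 0) ∧
        (∀ j : Fin g,
          (∑ r : Fin (n + s * g), pkt vhat (⟨0, hs⟩ : Fin s) j r * k r) = t j) ∧
        (∑ r : Fin (n + s * g), ystar r * k r) = tstar}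
      = q ^ (n - 1) := by

  haveI : Fact q.Prime := ⟨hq⟩
  have hli := (im_pkt_indep vhat).option hy
  have h := im_card_aux _ hli
    (fun o => Option.casesOn' o tstar
      (fun p : Fin s × Fin g => if p.1 = ⟨0, hs⟩ then t p.2 else 0))
  have hc : Fintype.card (Fin (n + s * g)) - Fintype.card (Option (Fin s × Fin g)) = n - 1 := by
    simp; omega
  rw [hc] at h
  rw [← h]
  congr 1
  ext k
  simp only [Set.mem_setOf_eq, Option.forall, Option.casesOn'_none, Option.casesOn'_some,
    Prod.forall]
  constructor
  · rintro ⟨h1, h2, h3⟩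
    refine ⟨h3, fun i j => ?_⟩
    by_cases hi : i = ⟨0, hs⟩
    · subst hi; simpa using h2 j
    · simpa [hi] using h1 i hi j
  · rintro ⟨h3, h4⟩
    refine ⟨fun i hi j => ?_, fun j => ?_, h3⟩
    · simpa [hi] using h4 i j
    · simpa using h4 ⟨0, hs⟩ j
end

section
/- Existence and uniqueness of the CPK padding: fix a source index i and let r_{i'} ∈ F^{n+(s−1)+m}, for i' ∈ Fin s with i' ≠ i, be the controller's vectors. Assume the (s−1)×(s−1) matrix R whose entry in row i' and column l is the (n+l)-th coordinate of r_{i'} is invertible. Then for every data vector v̂ ∈ F^n and every augmentation index k ∈ Fin m, there exists a unique padding vector p ∈ F^{s−1} such that the padded packet (v̂, p, e_k) ∈ F^{n+(s−1)+m} satisfies r_{i'} · (v̂, p, e_k) = 0 for all i' ≠ i. -/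
/-- existence and uniqueness of the CPK padding.  Fix a source index
`i` and let `r_{i'} ∈ F^{n+(s−1)+m}` (for `i' ≠ i`) be the controller's vectors.
If the `(s−1)×(s−1)` matrix `R` with entries `R_{i',l} = r_{i'}^{(n+l)}` is
invertible, then for every data vector `v̂ ∈ F^n` and every augmentation index
`k ∈ Fin m` there is a unique padding `p ∈ F^{s−1}` such that the padded packet
`(v̂, p, e_k)` is orthogonal to `r_{i'}` for all `i' ≠ i`.  (The rows of `R` are
enumerated by a fixed bijection `e : {i' ≠ i} ≃ Fin (s−1)`.) -/
theorem cpk_padding_exists_unique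
    (q s g n : ℕ) (hq : q.Prime) (hs : 1 < s) (hg : 0 < g) (hn : 0 < n)
    (i : Fin s)
    (r : Fin s → Fin (n + (s - 1) + s * g) → ZMod q)
    (e : {i' : Fin s // i' ≠ i} ≃ Fin (s - 1))
    (hR : IsUnit (Matrix.of fun a l : Fin (s - 1) =>
      r (e.symm a).1 ⟨n + l.1, by have := l.2; omega⟩))
    (vhat : Fin n → ZMod q) (k : Fin (s * g)) :
    ∃! p : Fin (s - 1) → ZMod q,
      ∀ i' : Fin s, i' ≠ i →
        (∑ r' : Fin (n + (s - 1) + s * g),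
            r i' r' * (Fin.append (Fin.append vhat p) (Pi.single k (1 : ZMod q))) r')
          = 0 := by
  set R : Matrix (Fin (s - 1)) (Fin (s - 1)) (ZMod q) := Matrix.of fun a l : Fin (s - 1) =>
      r (e.symm a).1 ⟨n + l.1, by have := l.2; omega⟩ with hRdef
  let c : Fin (s - 1) → ZMod q := fun a =>
    (∑ x : Fin n, r (e.symm a).1 (Fin.castAdd (s * g) (Fin.castAdd (s - 1) x)) * vhat x)
      + r (e.symm a).1 (Fin.natAdd (n + (s - 1)) k)
  have key : ∀ (p : Fin (s - 1) → ZMod q) (a : Fin (s - 1)),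
      (∑ r' : Fin (n + (s - 1) + s * g), r (e.symm a).1 r' *
        (Fin.append (Fin.append vhat p) (Pi.single k (1 : ZMod q))) r')
        = c a + (R.mulVec p) a := by
    intro p a
    have h2 : (R.mulVec p) a = ∑ x : Fin (s - 1),
        r (e.symm a).1 (Fin.castAdd (s * g) (Fin.natAdd n x)) * p x := rfl
    rw [h2, Fin.sum_univ_add, Fin.sum_univ_add]
    simp only [Fin.append_left, Fin.append_right, c]
    have h3 : ∑ x : Fin (s * g), r (e.symm a).1 (Fin.natAdd (n + (s - 1)) x) *
        (Pi.single k (1 : ZMod q) : Fin (s * g) → ZMod q) x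
        = r (e.symm a).1 (Fin.natAdd (n + (s - 1)) k) := by
      simp [Pi.single_apply]
    rw [h3]
    ring
  have equiv : ∀ p : Fin (s - 1) → ZMod q, (∀ i' : Fin s, i' ≠ i →
        (∑ r' : Fin (n + (s - 1) + s * g),
            r i' r' * (Fin.append (Fin.append vhat p) (Pi.single k (1 : ZMod q))) r')
          = 0) ↔ R.mulVec p = -c := by
    intro p
    constructor
    · intro h
      funext a
      have := h (e.symm a).1 (e.symm a).2
      rw [key] at this
      exact eq_neg_of_add_eq_zero_right this
    · intro h i' hi'
      have := key p (e ⟨i', hi'⟩)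
      rw [Equiv.symm_apply_apply, h] at this
      simpa using this
  simp only [equiv]
  obtain ⟨u, hu⟩ := hR
  have hl : (↑u⁻¹ : Matrix _ _ (ZMod q)) * R = 1 := by rw [← hu]; simp
  have hr : R * (↑u⁻¹ : Matrix _ _ (ZMod q)) = 1 := by rw [← hu]; simp
  refine ⟨(↑u⁻¹ : Matrix _ _ (ZMod q)).mulVec (-c), ?_, ?_⟩
  · simp only [Matrix.mulVec_mulVec, hr, Matrix.one_mulVec]
  · intro p hp
    rw [← hp, Matrix.mulVec_mulVec, hl, Matrix.one_mulVec]
end
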